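/- arXiv:1308.3144 — 4 statements merged into one kernel-verified Lean document; each statement's English description precedes it below -/
import Mathlib

section
/- Fix a constant 0 < ε < 1/10. Let (T_k)_{k≥1} be a sequence of finite rooted forests, write n_k = |T_k| for the number of vertices of T_k, and call a vertex v of T_k poor if |D(v)| < εk and rich otherwise. Suppose that (the number of poor vertices of T_k)/n_k → 0 as k → ∞. Then for every constant C > 0, (the number of vertices of T_k of height less than Ck)/n_k → 0 as k → ∞; that is, all but o(n_k) vertices of T_k are at height at least Ck. -/
open Filter

/-- Iterated parent map of a rooted forest: `parIter par n v` is the vertex reached from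
`v` by `n` applications of the parent map `par` (or `none` if a root is passed). -/
def parIter {V : Type*} (par : V → Option V) : ℕ → V → Option V
  | 0, v => some v
  | n + 1, v => (parIter par n v).bind par

/-- A parent map defines a rooted forest if iterating it from any vertex eventually
reaches a root. -/
def IsRootedForest {V : Type*} (par : V → Option V) : Prop :=
  ∀ v : V, ∃ n : ℕ, parIter par n v = none

/-- `u` is an ancestor of `v`. -/
def IsAnc {V : Type*} (par : V → Option V) (u v : V) : Prop :=
  ∃ n : ℕ, 0 < n ∧ parIter par n v = some u

/-- The set `D(v)` of descendants of `v`. -/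
def Desc {V : Type*} (par : V → Option V) (v : V) : Set V :=
  {w | IsAnc par v w}

/-!
Fix thresholds `t` and `h`, call a vertex poor if it has fewer than `t` descendants and rich
otherwise, and call a rich vertex lowest if all its descendants are poor. The descendant sets
of lowest rich vertices are pairwise disjoint, consist of poor vertices and have at least `t`
elements each, so there are at most `#poor / t` lowest rich vertices. Every rich vertex
of height less than `h` is reached by fewer than `h` parent steps from a lowest rich vertex, hence
there are at most `⌈h⌉ * #poor / t` of them. For `t = ε * k` and `h = C * k` the ratio
`⌈h⌉ / t` is bounded.
-/

/-- The poor vertices at threshold `t`: those with fewer than `t` descendants. -/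
def poorVertices {V : Type*} (par : V → Option V) (t : ℝ) : Set V :=
  {v | ((Desc par v).ncard : ℝ) < t}

/-- The vertices of height less than `h`, encoded without the height function: those with no
descendant (and not even the vertex itself, at distance `0`) at distance at least `h`. -/
def verticesHeightLT {V : Type*} (par : V → Option V) (h : ℝ) : Set V :=
  {v | ∀ (n : ℕ) (w : V), h ≤ (n : ℝ) → parIter par n w ≠ some v}

/-- The lowest vertices of `R`, i.e. the elements of `R` with no descendant in `R`. -/
def lowestVertices {V : Type*} (par : V → Option V) (R : Set V) : Set V :=
  {v | v ∈ R ∧ Disjoint (Desc par v) R}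

section ParentMap

variable {V : Type*} {par : V → Option V} {R : Set V}

theorem parIter_add (a b : ℕ) (w : V) :
    parIter par (a + b) w = (parIter par a w).bind (parIter par b) := by
  induction b with
  | zero => simp [parIter]
  | succ b ih => rw [← add_assoc, parIter, ih, Option.bind_assoc]; rfl

theorem isAnc_of_parIter_of_lt {a b : ℕ} {u v w : V} (hab : a < b)
    (ha : parIter par a w = some v) (hb : parIter par b w = some u) : IsAnc par u v :=
  ⟨b - a, Nat.sub_pos_of_lt hab, by
    rwa [← Nat.add_sub_of_le hab.le, parIter_add, ha, Option.bind_some] at hb⟩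

theorem IsAnc.eq_or_isAnc_or_isAnc {u v w : V} (hu : IsAnc par u w) (hv : IsAnc par v w) :
    u = v ∨ IsAnc par u v ∨ IsAnc par v u := by
  obtain ⟨a, -, ha⟩ := hu
  obtain ⟨b, -, hb⟩ := hv
  rcases lt_trichotomy a b with hab | rfl | hba
  · exact .inr (.inr (isAnc_of_parIter_of_lt hab ha hb))
  · exact .inl (Option.some.inj (ha.symm.trans hb))
  · exact .inr (.inl (isAnc_of_parIter_of_lt hba hb ha))

theorem pairwiseDisjoint_desc_lowestVertices :
    (lowestVertices par R).PairwiseDisjoint (Desc par) := by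
  intro u hu v hv huv
  refine Set.disjoint_left.2 fun w huw hvw => ?_
  rcases IsAnc.eq_or_isAnc_or_isAnc huw hvw with h | h | h
  · exact huv h
  · exact Set.disjoint_left.1 hu.2 h hv.1
  · exact Set.disjoint_left.1 hv.2 h hu.1

theorem exists_parIter_lowestVertices_eq_some {h : ℝ} {v : V}
    (hv : v ∈ verticesHeightLT par h) (hvR : v ∈ R) :
    ∃ n : ℕ, (n : ℝ) < h ∧ ∃ w ∈ lowestVertices par R, parIter par n w = some v := by
  let distances : Set ℕ := {n | ∃ w ∈ R, parIter par n w = some v}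
  have lt_height {n : ℕ} (hn : n ∈ distances) : (n : ℝ) < h := by
    obtain ⟨w, -, hw⟩ := hn
    exact lt_of_not_ge fun hhn => hv n w hhn hw
  have bddAbove : BddAbove distances :=
    ⟨⌈h⌉₊, fun n hn => (Nat.lt_ceil.2 (lt_height hn)).le⟩
  have max_mem : sSup distances ∈ distances := Nat.sSup_mem ⟨0, v, hvR, rfl⟩ bddAbove
  have max_lt : ((sSup distances : ℕ) : ℝ) < h := lt_height max_mem
  obtain ⟨w, hwR, hw⟩ := max_mem
  refine ⟨sSup distances, max_lt, w, ⟨hwR, ?_⟩, hw⟩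
  refine Set.disjoint_left.2 fun x ⟨a, ha, hxw⟩ hxR => ?_
  have farther : a + sSup distances ∈ distances :=
    ⟨x, hxR, by rw [parIter_add, hxw, Option.bind_some, hw]⟩
  have := le_csSup bddAbove farther
  omega

variable [Finite V]

theorem ncard_verticesHeightLT_inter_le (h : ℝ) :
    (verticesHeightLT par h ∩ R).ncard ≤ ⌈h⌉₊ * (lowestVertices par R).ncard := by
  have subset_image : some '' (verticesHeightLT par h ∩ R) ⊆
      (fun p : ℕ × V => parIter par p.1 p.2) '' (Set.Iio ⌈h⌉₊ ×ˢ lowestVertices par R) := by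
    rintro _ ⟨v, ⟨hv, hvR⟩, rfl⟩
    obtain ⟨n, hn, w, hw, hwv⟩ := exists_parIter_lowestVertices_eq_some hv hvR
    exact ⟨(n, w), ⟨Nat.lt_ceil.2 hn, hw⟩, hwv⟩
  have finite_prod : (Set.Iio ⌈h⌉₊ ×ˢ lowestVertices par R).Finite :=
    (Set.finite_Iio _).prod (Set.toFinite _)
  calc (verticesHeightLT par h ∩ R).ncard
      = (some '' (verticesHeightLT par h ∩ R)).ncard :=
        (Set.ncard_image_of_injective _ (Option.some_injective V)).symm
    _ ≤ (Set.Iio ⌈h⌉₊ ×ˢ lowestVertices par R).ncard :=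
        (Set.ncard_le_ncard subset_image).trans (Set.ncard_image_le finite_prod)
    _ = ⌈h⌉₊ * (lowestVertices par R).ncard := by rw [Set.ncard_prod, Set.ncard_Iio_nat]

theorem ncard_lowestVertices_mul_le {t : ℝ} (hR : ∀ v ∈ R, t ≤ (Desc par v).ncard) :
    (lowestVertices par R).ncard * t ≤ Rᶜ.ncard := by
  have finite_lowest : (lowestVertices par R).Finite := Set.toFinite _
  have union_subset : ⋃ v ∈ lowestVertices par R, Desc par v ⊆ Rᶜ :=
    Set.iUnion₂_subset fun _ hv => hv.2.subset_compl_right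
  have sum_le : ∑ v ∈ finite_lowest.toFinset, (Desc par v).ncard ≤ Rᶜ.ncard := by
    rw [← finsum_mem_eq_finite_toFinset_sum, ← finite_lowest.ncard_biUnion
      (fun _ _ => Set.toFinite _) pairwiseDisjoint_desc_lowestVertices]
    exact Set.ncard_le_ncard union_subset
  calc (lowestVertices par R).ncard * t
      = finite_lowest.toFinset.card • t := by
        rw [Set.ncard_eq_toFinset_card _ finite_lowest, nsmul_eq_mul]
    _ ≤ ∑ v ∈ finite_lowest.toFinset, ((Desc par v).ncard : ℝ) :=
        Finset.card_nsmul_le_sum _ _ _ fun v hv => hR v (finite_lowest.mem_toFinset.1 hv).1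
    _ ≤ Rᶜ.ncard := mod_cast sum_le

theorem mul_ncard_verticesHeightLT_le (par : V → Option V) {t : ℝ} (ht : 0 ≤ t) (h : ℝ) :
    t * (verticesHeightLT par h).ncard ≤ (t + ⌈h⌉₊) * (poorVertices par t).ncard := by
  set P := poorVertices par t
  set L := verticesHeightLT par h
  set m := (lowestVertices par Pᶜ).ncard
  have lowest_mul_le : m * t ≤ (P.ncard : ℝ) := by
    simpa only [compl_compl] using
      ncard_lowestVertices_mul_le (R := Pᶜ) fun _ hv => not_lt.1 hv
  have low_le : (L.ncard : ℝ) ≤ P.ncard + ⌈h⌉₊ * m := by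
    have poor_or_rich : L ⊆ P ∪ L ∩ Pᶜ := by
      rw [Set.union_inter_distrib_left, Set.union_compl_self, Set.inter_univ]
      exact Set.subset_union_right
    exact_mod_cast calc L.ncard
      _ ≤ P.ncard + (L ∩ Pᶜ).ncard :=
        (Set.ncard_le_ncard poor_or_rich).trans (Set.ncard_union_le _ _)
      _ ≤ P.ncard + ⌈h⌉₊ * m :=
        Nat.add_le_add_left (ncard_verticesHeightLT_inter_le h) _
  calc t * L.ncard
      ≤ t * (P.ncard + ⌈h⌉₊ * m) := by gcongr
    _ = t * P.ncard + ⌈h⌉₊ * (m * t) := by ring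
    _ ≤ t * P.ncard + ⌈h⌉₊ * P.ncard := by gcongr
    _ = (t + ⌈h⌉₊) * P.ncard := by ring

theorem ncard_verticesHeightLT_mul_le (par : V → Option V) {ε : ℝ} (hε : 0 < ε) (C : ℝ)
    {k : ℕ} (hk : 0 < k) :
    ((verticesHeightLT par (C * k)).ncard : ℝ) ≤
      (1 + ⌈C⌉₊ / ε) * (poorVertices par (ε * k)).ncard := by
  have ceil_le : (⌈C * k⌉₊ : ℝ) ≤ ⌈C⌉₊ * k := by
    exact_mod_cast Nat.ceil_le.2 (by push_cast; gcongr; exact Nat.le_ceil C)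
  have threshold_pos : 0 < ε * k := by positivity
  refine le_of_mul_le_mul_left ?_ threshold_pos
  calc ε * k * (verticesHeightLT par (C * k)).ncard
      ≤ (ε * k + ⌈C * k⌉₊) * (poorVertices par (ε * k)).ncard :=
        mul_ncard_verticesHeightLT_le par threshold_pos.le _
    _ ≤ (ε * k + ⌈C⌉₊ * k) * (poorVertices par (ε * k)).ncard := by gcongr
    _ = ε * k * ((1 + ⌈C⌉₊ / ε) * (poorVertices par (ε * k)).ncard) := by field_simp

end ParentMap

theorem few_low_vertices_general {ε : ℝ} (hε : 0 < ε) {V : ℕ → Type*} [∀ k, Fintype (V k)]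
    (par : ∀ k, V k → Option (V k))
    (hpoor : Tendsto (fun k =>
        ((poorVertices (par k) (ε * k)).ncard : ℝ) / Fintype.card (V k)) atTop (nhds 0))
    (C : ℝ) :
    Tendsto (fun k =>
        ((verticesHeightLT (par k) (C * k)).ncard : ℝ) / Fintype.card (V k)) atTop (nhds 0) := by
  have bound_tendsto := hpoor.const_mul (1 + ⌈C⌉₊ / ε)
  rw [mul_zero] at bound_tendsto
  refine squeeze_zero' (.of_forall fun k => by positivity) ?_ bound_tendsto
  filter_upwards [eventually_gt_atTop 0] with k hk
  rw [← mul_div_assoc]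
  gcongr
  exact ncard_verticesHeightLT_mul_le (par k) hε C hk

/-- **Lemma 5 of the paper.**  Fix `0 < ε < 1/10`.  Let `(T_k)` be a sequence of finite
rooted forests with `n_k` vertices, and call a vertex `v` *poor* if `|D(v)| < εk`.  If the
number of poor vertices is `o(n_k)`, then for every constant `C > 0` all but `o(n_k)`
vertices are at height at least `Ck`; i.e. the proportion of vertices of height `< Ck`
(no descendant at distance at least `Ck`) tends to `0`. -/
theorem few_low_vertices (ε : ℝ) (hε0 : 0 < ε) (hε : ε < 1 / 10)
    (V : ℕ → Type) [∀ k, Fintype (V k)]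
    (par : ∀ k, V k → Option (V k))
    (hforest : ∀ k, IsRootedForest (par k))
    (hpoor : Tendsto (fun k =>
        ({v : V k | ((Desc (par k) v).ncard : ℝ) < ε * k}.ncard : ℝ) / Fintype.card (V k))
      atTop (nhds 0))
    (C : ℝ) (hC : 0 < C) :
    Tendsto (fun k =>
        ({v : V k | ∀ (n : ℕ) (w : V k), C * k ≤ (n : ℝ) →
            parIter (par k) n w ≠ some v}.ncard : ℝ) / Fintype.card (V k))
      atTop (nhds 0) :=
  few_low_vertices_general hε0 par hpoor C
end

section
/- Let T be a finite rooted forest, let v be a vertex of T, and let m be a positive integer with m ≤ |D(v)|. Then there exists a set S of exactly m descendants of v that is closed under taking descendants, i.e., for every w ∈ S, D(w) ⊆ S. Consequently, every w ∈ S satisfies |D(w)| ≤ m − 1. -/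
/-!
In an acyclic forest the descendant relation is a strict partial order for which `D(v)` is the set
`Iio v`, and a set is closed under taking descendants exactly when it is a lower set. A lower set
remains one when a maximal element is erased, so erasing maximal elements from `D(v)` one at a time
produces lower sets of every smaller size.
-/

theorem exists_isLowerSet_subset_ncard_eq {α : Type*} [PartialOrder α] {s : Set α}
    (hs : IsLowerSet s) {m : ℕ} (hm : m ≤ s.ncard) :
    ∃ t ⊆ s, IsLowerSet t ∧ t.ncard = m := by
  induction hm using Nat.decreasingInduction with
  | self => exact ⟨s, subset_rfl, hs, rfl⟩
  | of_succ k _ ih =>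
    obtain ⟨t, hts, ht, htk⟩ := ih
    have ht_pos : 0 < t.ncard := by lia
    obtain ⟨a, ha⟩ := (Set.finite_of_ncard_pos ht_pos).exists_maximal
      (Set.nonempty_of_ncard_ne_zero ht_pos.ne')
    refine ⟨t \ {a}, Set.sdiff_subset.trans hts,
      ht.erase fun b hb hab ↦ (ha.eq_of_le hb hab).symm, ?_⟩
    rw [Set.ncard_sdiff_singleton_of_mem ha.prop, htk, Nat.add_sub_cancel]

section Forest

variable {V : Type*} {par : V → Option V}

theorem parIter_eq_iterate (par : V → Option V) (n : ℕ) (v : V) :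
    parIter par n v = (Option.bind · par)^[n] (some v) := by
  induction n with
  | zero => rfl
  | succ n ih => rw [parIter, ih, Function.iterate_succ_apply']

theorem IsAnc.trans {u v w : V} (huv : IsAnc par u v) (hvw : IsAnc par v w) : IsAnc par u w := by
  obtain ⟨k, hk, hku⟩ := huv
  obtain ⟨n, -, hnv⟩ := hvw
  refine ⟨k + n, Nat.add_pos_left hk n, ?_⟩
  rw [parIter_eq_iterate] at hku hnv ⊢
  rw [Function.iterate_add_apply, hnv, hku]

theorem IsRootedForest.not_isAnc_self (hforest : IsRootedForest par) (v : V) :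
    ¬ IsAnc par v v := by
  rintro ⟨n, hn, hnv⟩
  obtain ⟨N, hN⟩ := hforest v
  rw [parIter_eq_iterate] at hnv hN
  have hv_periodic : Function.IsPeriodicPt (Option.bind · par) n (some v) := hnv
  have hnone_fixed : Function.IsFixedPt (Option.bind · par) none := rfl
  -- `some v` and `none` are both periodic and have the same `N`-th iterate, so they coincide.
  exact Option.some_ne_none v <|
    (hv_periodic.iterate N).eq_of_apply_eq_same ((hnone_fixed.isPeriodicPt n).iterate N) hn
      (hN.trans (hnone_fixed.iterate N).symm)

/-- The order on the vertices of an acyclic forest in which `w < u` means that `w` is a descendant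
of `u`, so that roots are maximal and `Set.Iio v` is `Desc par v` by definition. It depends on
`par`, hence is not an instance. -/
abbrev descendantOrder (hacyclic : ∀ w, ¬ IsAnc par w w) : PartialOrder V :=
  haveI : IsStrictOrder V fun w u ↦ IsAnc par u w :=
    { irrefl := hacyclic
      trans := fun _ _ _ hvw huv ↦ huv.trans hvw }
  partialOrderOfSO fun w u ↦ IsAnc par u w

theorem exists_descendant_closed_subset_general (hacyclic : ∀ w, ¬ IsAnc par w w)
    {v : V} {m : ℕ} (hm : 0 < m) (hmD : m ≤ (Desc par v).ncard) :
    ∃ S : Set V, S ⊆ Desc par v ∧ S.ncard = m ∧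
      (∀ w ∈ S, Desc par w ⊆ S) ∧ ∀ w ∈ S, (Desc par w).ncard ≤ m - 1 := by
  let := descendantOrder hacyclic
  obtain ⟨S, hSv, hS, hSm⟩ := exists_isLowerSet_subset_ncard_eq (isLowerSet_Iio v) hmD
  have hclosed : ∀ w ∈ S, Desc par w ⊆ S := fun w hw ↦ hS.Iio_subset hw
  refine ⟨S, hSv, hSm, hclosed, fun w hw ↦ Nat.le_sub_one_of_lt ?_⟩
  have hS_finite : S.Finite := Set.finite_of_ncard_pos (hSm ▸ hm)
  have hssub : Desc par w ⊂ S := (hclosed w hw).ssubset_of_mem_notMem hw (hacyclic w)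
  exact hSm ▸ Set.ncard_lt_ncard hssub hS_finite

end Forest

/-- **From the proof of Lemma 5 of the paper.**  Let `T` be a finite rooted forest, `v` a
vertex, and `m` a positive integer with `m ≤ |D(v)|`.  Then there is a set `S` of exactly
`m` descendants of `v` that is closed under taking descendants; consequently every
`w ∈ S` satisfies `|D(w)| ≤ m - 1`. -/
theorem exists_descendant_closed_subset (V : Type*) [Fintype V]
    (par : V → Option V) (hforest : IsRootedForest par)
    (v : V) (m : ℕ) (hm : 0 < m) (hmD : m ≤ (Desc par v).ncard) :
    ∃ S : Set V, S ⊆ Desc par v ∧ S.ncard = m ∧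
      (∀ w ∈ S, Desc par w ⊆ S) ∧ ∀ w ∈ S, (Desc par w).ncard ≤ m - 1 :=
  exists_descendant_closed_subset_general hforest.not_isAnc_self hm hmD
end

section
/- Fix a constant 0 < ε < 1/10 and a positive integer k. Let T be a finite rooted forest and let v be a vertex of T with |D_{≤(1−5ε)k}(v)| ≤ (1−4ε)k. Let N ⊆ A(v) ∪ D(v) be a set with |N| ≥ (1−ε)k, and suppose that fewer than εk vertices u ∈ N satisfy d(u,v) ≥ (1−5ε)k. Then there are at least εk vertices u ∈ N ∩ A(v) with εk ≤ d(u,v) ≤ (1−5ε)k. -/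
/-- The set `A(v)` of ancestors of `v`. -/
def Anc {V : Type*} (par : V → Option V) (v : V) : Set V :=
  {u | IsAnc par u v}

/-- The set `D_{≤r}(v)` of descendants of `v` at distance at most `r`. -/
def DescLe {V : Type*} (par : V → Option V) (v : V) (r : ℝ) : Set V :=
  {w | ∃ n : ℕ, 0 < n ∧ (n : ℝ) ≤ r ∧ parIter par n w = some v}

/-!
Every vertex of `N` is at distance at least `r` from `v`, a descendant within distance `r`, an
ancestor within distance `a`, or an ancestor at distance between `a` and `r`. The parent map is a
function, so there are at most `a` ancestors of the third kind. With `a = εk` and `r = (1 - 5ε)k`,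
the first three kinds account for fewer than `εk`, at most `(1 - 4ε)k` and at most `εk` vertices
of `N`, which leaves more than `(1 - ε)k - (1 - 2ε)k = εk` of the last kind.
-/

/-- The ancestors of `v` at distance at most `r`, the counterpart of `DescLe`. -/
def AncLe {V : Type*} (par : V → Option V) (v : V) (r : ℝ) : Set V :=
  {u | ∃ n : ℕ, 0 < n ∧ (n : ℝ) ≤ r ∧ parIter par n v = some u}

/-- The ancestors of `v` at distance between `a` and `r`. The vertex `v` counts as an ancestor of
itself at distance `0`, so it is included when `a ≤ 0 ≤ r`. -/
def AncBetween {V : Type*} (par : V → Option V) (v : V) (a r : ℝ) : Set V :=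
  {u | ∃ n : ℕ, a ≤ (n : ℝ) ∧ (n : ℝ) ≤ r ∧ parIter par n v = some u}

/-- The ancestors and descendants of `v` at distance at least `r`. As in `AncBetween`, the vertex
`v` itself is included when `r ≤ 0`. -/
def AncDescGe {V : Type*} (par : V → Option V) (v : V) (r : ℝ) : Set V :=
  {u | ∃ n : ℕ, r ≤ (n : ℝ) ∧ (parIter par n v = some u ∨ parIter par n u = some v)}

section RelativesAtDistance

variable {V : Type*} (par : V → Option V) (v : V)

theorem encard_setOf_parIter_eq_some_le (I : Set ℕ) :
    {u | ∃ n ∈ I, parIter par n v = some u}.encard ≤ I.encard := by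
  rw [← (Option.some_injective V).encard_image]
  have h_image : some '' {u | ∃ n ∈ I, parIter par n v = some u} ⊆
      (fun n ↦ parIter par n v) '' I := by
    rintro _ ⟨u, ⟨n, hn, hu⟩, rfl⟩
    exact ⟨n, hn, hu⟩
  exact (Set.encard_le_encard h_image).trans (Set.encard_image_le _ I)

theorem encard_ancLe_le (r : ℝ) : (AncLe par v r).encard ≤ ⌊r⌋₊ := by
  have h_subset : AncLe par v r ⊆ {u | ∃ n ∈ Set.Ioc 0 ⌊r⌋₊, parIter par n v = some u} := by
    rintro u ⟨n, hn, hnr, hu⟩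
    exact ⟨n, ⟨hn, Nat.le_floor hnr⟩, hu⟩
  calc (AncLe par v r).encard
      ≤ (Set.Ioc 0 ⌊r⌋₊).encard :=
        (Set.encard_le_encard h_subset).trans (encard_setOf_parIter_eq_some_le par v _)
    _ = ⌊r⌋₊ := by simp [← Finset.coe_Ioc, Set.encard_coe_eq_coe_finsetCard]

theorem finite_ancLe (r : ℝ) : (AncLe par v r).Finite :=
  Set.finite_of_encard_le_coe (encard_ancLe_le par v r)

theorem ncard_ancLe_le (r : ℝ) : (AncLe par v r).ncard ≤ ⌊r⌋₊ :=
  ENat.toNat_le_of_le_natCast (encard_ancLe_le par v r)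

theorem desc_subset_ancDescGe_union_descLe (r : ℝ) :
    Desc par v ⊆ AncDescGe par v r ∪ DescLe par v r := by
  rintro u ⟨n, hn, hu⟩
  exact (le_total r n).imp (fun hr ↦ ⟨n, hr, .inr hu⟩) fun hr ↦ ⟨n, hn, hr, hu⟩

theorem anc_subset_ancDescGe_union_ancLe_union_ancBetween (a r : ℝ) :
    Anc par v ⊆ AncDescGe par v r ∪ (AncLe par v a ∪ AncBetween par v a r) := by
  rintro u ⟨n, hn, hu⟩
  rcases le_total r n with hr | hr
  · exact .inl ⟨n, hr, .inl hu⟩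
  · exact .inr ((le_total (n : ℝ) a).imp (fun ha ↦ ⟨n, hn, ha, hu⟩) fun ha ↦ ⟨n, ha, hr, hu⟩)

variable {par v}

theorem ncard_le_of_subset_anc_union_desc {N : Set V} (hN : N ⊆ Anc par v ∪ Desc par v)
    (hN_fin : N.Finite) (a : ℝ) {r : ℝ} (h_desc_fin : (DescLe par v r).Finite) :
    N.ncard ≤ (N ∩ AncDescGe par v r).ncard + (DescLe par v r).ncard + ⌊a⌋₊ +
      (N ∩ AncBetween par v a r).ncard := by
  have h_cover : N ⊆ N ∩ AncDescGe par v r ∪ DescLe par v r ∪ AncLe par v a ∪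
      N ∩ AncBetween par v a r := by
    intro u hu
    rcases hN hu with h_anc | h_desc
    · rcases anc_subset_ancDescGe_union_ancLe_union_ancBetween par v a r h_anc with
        h_far | h_near | h_mid
      · exact .inl (.inl (.inl ⟨hu, h_far⟩))
      · exact .inl (.inr h_near)
      · exact .inr ⟨hu, h_mid⟩
    · rcases desc_subset_ancDescGe_union_descLe par v r h_desc with h_far | h_near
      · exact .inl (.inl (.inl ⟨hu, h_far⟩))
      · exact .inl (.inl (.inr h_near))
  have h_cover_fin := (((hN_fin.inter_of_left (AncDescGe par v r)).union h_desc_fin).union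
    (finite_ancLe par v a)).union (hN_fin.inter_of_left (AncBetween par v a r))
  calc N.ncard
      ≤ _ := Set.ncard_le_ncard h_cover h_cover_fin
    _ ≤ (N ∩ AncDescGe par v r).ncard + (DescLe par v r).ncard + (AncLe par v a).ncard +
          (N ∩ AncBetween par v a r).ncard := by
        grw [Set.ncard_union_le, Set.ncard_union_le, Set.ncard_union_le]
    _ ≤ _ := by grw [ncard_ancLe_le]

theorem light_full_many_mid_ancestors_general {ε k : ℝ}
    (h_desc_fin : (DescLe par v ((1 - 5 * ε) * k)).Finite)
    (hlight : ((DescLe par v ((1 - 5 * ε) * k)).ncard : ℝ) ≤ (1 - 4 * ε) * k)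
    {N : Set V} (hN_fin : N.Finite) (hN : N ⊆ Anc par v ∪ Desc par v)
    (hNcard : (1 - ε) * k ≤ (N.ncard : ℝ))
    (hfew : ((N ∩ AncDescGe par v ((1 - 5 * ε) * k)).ncard : ℝ) < ε * k) :
    ε * k < ((N ∩ AncBetween par v (ε * k) ((1 - 5 * ε) * k)).ncard : ℝ) := by
  have h_floor : (⌊ε * k⌋₊ : ℝ) ≤ ε * k := Nat.floor_le ((Nat.cast_nonneg _).trans hfew.le)
  have h_count : (N.ncard : ℝ) ≤ (N ∩ AncDescGe par v ((1 - 5 * ε) * k)).ncard +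
      (DescLe par v ((1 - 5 * ε) * k)).ncard + ⌊ε * k⌋₊ +
      (N ∩ AncBetween par v (ε * k) ((1 - 5 * ε) * k)).ncard :=
    mod_cast ncard_le_of_subset_anc_union_desc hN hN_fin (ε * k) h_desc_fin
  linarith

end RelativesAtDistance

/-- **From the proof of Theorem 1 of the paper (full light vertices).**
Fix `0 < ε < 1/10` and a positive integer `k`.  Let `T` be a finite rooted forest and `v`
a vertex with `|D_{≤(1-5ε)k}(v)| ≤ (1-4ε)k` (i.e. `v` is light).  Let `N ⊆ A(v) ∪ D(v)`
with `|N| ≥ (1-ε)k`, and suppose fewer than `εk` vertices `u ∈ N` satisfy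
`d(u,v) ≥ (1-5ε)k`.  Then there are at least `εk` vertices `u ∈ N ∩ A(v)` with
`εk ≤ d(u,v) ≤ (1-5ε)k`. -/
theorem light_full_many_mid_ancestors (ε : ℝ) (hε0 : 0 < ε) (hε : ε < 1 / 10)
    (k : ℕ) (hk : 0 < k)
    (V : Type*) [Fintype V]
    (par : V → Option V) (hforest : IsRootedForest par)
    (v : V) (hlight : ((DescLe par v ((1 - 5 * ε) * k)).ncard : ℝ) ≤ (1 - 4 * ε) * k)
    (N : Set V) (hN : N ⊆ Anc par v ∪ Desc par v)
    (hNcard : (1 - ε) * k ≤ (N.ncard : ℝ))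
    (hfew : (({u ∈ N | ∃ n : ℕ, (1 - 5 * ε) * k ≤ (n : ℝ) ∧
        (parIter par n v = some u ∨ parIter par n u = some v)}).ncard : ℝ) < ε * k) :
    ε * k ≤ (({u ∈ N | ∃ n : ℕ, ε * k ≤ (n : ℝ) ∧ (n : ℝ) ≤ (1 - 5 * ε) * k ∧
        parIter par n v = some u}).ncard : ℝ) :=
  (light_full_many_mid_ancestors_general (Set.toFinite _) hlight (Set.toFinite N) hN hNcard hfew).le
end

section
/- Let a, b, L, m be positive integers and let P be a path with vertex sequence p_0, p_1, …, p_L in a graph G. Suppose there are indices s_0 < s_1 < … < s_m and t_0, t_1, …, t_m in {0, 1, …, L} such that for each 0 ≤ i ≤ m the pair p_{s_i} p_{t_i} is an edge of G (a chord) with t_i − s_i ≥ a, and for each 0 ≤ i ≤ m−1 we have t_i − b ≤ s_{i+1} < t_i (each new chord starts at most b steps below the top of the previous one). If a > 2b, then G contains a cycle of length at least (m+1)(a − 2b). -/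
/-!
Two strands climb along `p`, one using the chords of even index, the other those of odd index.
Suppose their tops `p (s i)` and `p (s (i + 1))` are the ends of a path that stays inside
`p 0, …, p (s (i + 1))`. The chord at `s i` lifts the lower strand over `p (s (i + 1))` to the fresh
vertex `p (t i)`, and `t i ≤ s (i + 2)` since `a > 2b`, so that strand can follow `p` up to
`p (s (i + 2))`; this adds more than `a - 2b` edges. With the top `t m` of the last chord playing
the role of `s (m + 1)`, the last chord joins the two strands into a cycle.
-/

section

variable {V : Type*} {G : SimpleGraph V}

/-- `HasPathIn G S u v ℓ` says that `G` has a path of length `ℓ` from `u` to `v` all of whose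
vertices lie in `S`. The set `S` keeps track of which vertices are still free for extending the
path. -/
def HasPathIn (G : SimpleGraph V) (S : Set V) (u v : V) (ℓ : ℕ) : Prop :=
  ∃ q : G.Walk u v, q.IsPath ∧ q.length = ℓ ∧ ∀ w ∈ q.support, w ∈ S

namespace HasPathIn

variable {S T : Set V} {u v w : V} {ℓ : ℕ}

theorem refl (hu : u ∈ S) : HasPathIn G S u u 0 :=
  ⟨.nil, .nil, rfl, by simpa using hu⟩

theorem symm (h : HasPathIn G S u v ℓ) : HasPathIn G S v u ℓ := by
  obtain ⟨q, hq, hlen, hsupp⟩ := h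
  exact ⟨q.reverse, hq.reverse, by simpa using hlen, by simpa using hsupp⟩

theorem cons (h : HasPathIn G S u v ℓ) (hwu : G.Adj w u) (hwS : w ∉ S) (hST : S ⊆ T)
    (hwT : w ∈ T) : HasPathIn G T w v (ℓ + 1) := by
  obtain ⟨q, hq, hlen, hsupp⟩ := h
  refine ⟨.cons hwu q, hq.cons fun hw => hwS (hsupp w hw), by simp [hlen], ?_⟩
  simpa using ⟨hwT, fun x hx => hST (hsupp x hx)⟩

theorem exists_isCycle (h : HasPathIn G S u v ℓ) (hvu : G.Adj v u) (hℓ : 2 ≤ ℓ) :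
    ∃ c : G.Walk v v, c.IsCycle ∧ c.length = ℓ + 1 := by
  obtain ⟨q, hq, hlen, -⟩ := h
  refine ⟨.cons hvu q, (SimpleGraph.Walk.cons_isCycle_iff q hvu).2 ⟨hq, fun hmem => ?_⟩,
    by simp [hlen]⟩
  have hone := hq.length_eq_one_of_mem_edges (Sym2.eq_swap ▸ hmem)
  omega

end HasPathIn

variable {p : ℕ → V} {L : ℕ}

theorem HasPathIn.cons_image_Iic {u v : V} {y z ℓ : ℕ} (hinj : Set.InjOn p (Set.Iic L))
    (h : HasPathIn G (p '' Set.Iic y) u v ℓ) (hadj : G.Adj (p z) u) (hyz : y < z) (hzL : z ≤ L) :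
    HasPathIn G (p '' Set.Iic z) (p z) v (ℓ + 1) := by
  have hfresh : p z ∉ p '' Set.Iic y := by
    rw [hinj.mem_image_iff (Set.Iic_subset_Iic.2 (hyz.le.trans hzL)) hzL]
    exact hyz.not_ge
  exact h.cons hadj hfresh (Set.image_mono (Set.Iic_subset_Iic.2 hyz.le))
    (Set.mem_image_of_mem p Set.self_mem_Iic)

theorem HasPathIn.extend_along {v : V} {y z ℓ : ℕ} (hinj : Set.InjOn p (Set.Iic L))
    (hpath : ∀ j < L, G.Adj (p j) (p (j + 1)))
    (h : HasPathIn G (p '' Set.Iic y) (p y) v ℓ) (hyz : y ≤ z) (hzL : z ≤ L) :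
    HasPathIn G (p '' Set.Iic z) (p z) v (ℓ + (z - y)) := by
  induction z, hyz using Nat.le_induction with
  | base => simpa using h
  | succ z hyz ih =>
    rw [Nat.succ_sub hyz]
    exact (ih (by omega)).cons_image_Iic hinj (hpath z hzL).symm z.lt_succ_self hzL

theorem hasPathIn_of_interlaced_chords {s t : ℕ → ℕ} {n : ℕ} (hinj : Set.InjOn p (Set.Iic L))
    (hpath : ∀ j < L, G.Adj (p j) (p (j + 1))) (hs : s 0 ≤ s 1) (hsL : s (n + 1) ≤ L)
    (hchord : ∀ i < n, G.Adj (p (s i)) (p (t i)))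
    (hst : ∀ i < n, s (i + 1) < t i) (hts : ∀ i < n, t i ≤ s (i + 2)) :
    HasPathIn G (p '' Set.Iic (s (n + 1))) (p (s (n + 1))) (p (s n))
      (s 1 - s 0 + ∑ i ∈ Finset.range n, (1 + (s (i + 2) - t i))) := by
  induction n with
  | zero =>
    have hstart : HasPathIn G (p '' Set.Iic (s 0)) (p (s 0)) (p (s 0)) 0 :=
      .refl (Set.mem_image_of_mem p Set.self_mem_Iic)
    simpa using hstart.extend_along hinj hpath hs hsL
  | succ n ih =>
    have hlt := hst n n.lt_succ_self
    have hle : t n ≤ s (n + 1 + 1) := hts n n.lt_succ_self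
    have hprev := ih (by omega) (fun i hi => hchord i (by omega)) (fun i hi => hst i (by omega))
      (fun i hi => hts i (by omega))
    have hjump := hprev.symm.cons_image_Iic hinj (hchord n n.lt_succ_self).symm hlt (hle.trans hsL)
    rw [Finset.sum_range_succ, ← add_assoc, ← add_assoc]
    exact hjump.extend_along hinj hpath hle hsL

end

theorem mul_le_add_sum_of_overlap {s t : ℕ → ℕ} {a b m : ℕ}
    (hlong : ∀ i ≤ m, s i + a ≤ t i) (hover : ∀ i ≤ m, t i ≤ s (i + 1) + b) :
    (m + 1) * (a - 2 * b) ≤ s 1 - s 0 + ∑ i ∈ Finset.range m, (1 + (s (i + 2) - t i)) := by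
  have hfirst : a - 2 * b ≤ s 1 - s 0 := by grind
  have hgain : ∀ i ∈ Finset.range m, a - 2 * b ≤ 1 + (s (i + 2) - t i) := by grind
  have hsum := Finset.card_nsmul_le_sum _ _ _ hgain
  rw [Finset.card_range, smul_eq_mul] at hsum
  linarith

/-- **The final cycle construction in the proof of Theorem 1 of the paper.**
Let `a, b, L, m` be positive integers and let `p_0, p_1, …, p_L` be (the vertex sequence
of) a path in a graph `G`.  Suppose there are indices `s_0 < s_1 < ⋯ < s_m` and
`t_0, …, t_m` in `{0, …, L}` such that each pair `p_{s_i} p_{t_i}` is an edge of `G`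
(a chord) with `t_i - s_i ≥ a`, and for each `i < m` we have `t_i - b ≤ s_{i+1} < t_i`
(each new chord starts at most `b` steps below the top of the previous one).  If
`a > 2b`, then `G` contains a cycle of length at least `(m+1)(a - 2b)`. -/
theorem cycle_from_overlapping_chords (V : Type*) (G : SimpleGraph V)
    (a b L m : ℕ) (ha : 0 < a) (hb : 0 < b) (hL : 0 < L) (hm : 0 < m)
    (p : ℕ → V)
    (hinj : ∀ i ≤ L, ∀ j ≤ L, p i = p j → i = j)
    (hpath : ∀ j < L, G.Adj (p j) (p (j + 1)))
    (s t : ℕ → ℕ)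
    (hsL : ∀ i ≤ m, s i ≤ L) (htL : ∀ i ≤ m, t i ≤ L)
    (hmono : ∀ i < m, s i < s (i + 1))
    (hchord : ∀ i ≤ m, G.Adj (p (s i)) (p (t i)))
    (hlong : ∀ i ≤ m, s i + a ≤ t i)
    (hover : ∀ i < m, t i ≤ s (i + 1) + b ∧ s (i + 1) < t i)
    (hab : 2 * b < a) :
    ∃ (v : V) (c : G.Walk v v), c.IsCycle ∧ (m + 1) * (a - 2 * b) ≤ c.length := by
  let u := Function.update s (m + 1) (t m)
  have hu : ∀ i ≤ m, u i = s i := fun i hi => Function.update_of_ne (by omega) _ _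
  have htop : u (m + 1) = t m := Function.update_self _ _ _
  have hrise : ∀ i ≤ m, u i + a ≤ t i := by grind
  have hdrop : ∀ i ≤ m, t i ≤ u (i + 1) + b := by grind
  have hcross : ∀ i < m, u (i + 1) < t i := by grind
  have hskip : ∀ i < m, t i ≤ u (i + 2) := by grind
  have hfirst : u 0 + 2 ≤ u 1 := by grind
  have hpathIn := hasPathIn_of_interlaced_chords (s := u) (t := t) (n := m)
    (fun i hi j hj => hinj i hi j hj) hpath (by omega) (htop ▸ htL m le_rfl)
    (fun i hi => hu i hi.le ▸ hchord i hi.le) hcross hskip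
  obtain ⟨c, hc, hlen⟩ := hpathIn.exists_isCycle
    (by simpa only [hu m le_rfl, htop] using hchord m le_rfl) (by omega)
  have hbound := mul_le_add_sum_of_overlap hrise hdrop
  exact ⟨_, c, hc, by omega⟩
end
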